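/- Let ι be a nonempty finite index type, and let Q, (X_i)_{i ∈ ι}, and Y be jointly distributed random variables on finite types with joint pmf p. If the conditional mutual information I(Q:Y|X_i) = 0 for every i ∈ ι, then I(Q:Y) ≤ ∑_y p_Y(y) * min_{i ∈ ι} I(X_i:y), where the sum ranges over y with p_Y(y) > 0. (That is, I_α ≤ I_min.) -/

import Mathlib

open Real Finset

/- STATEMENT 6: If `I(Q:Y|X i) = 0` for every `i`, then
`I(Q:Y) ≤ ∑_y p_Y(y) * min_i I(X i : y)`, i.e. `I_α ≤ I_min`.
The joint pmf is `p : Q × (∀ i, X i) × Y → ℝ`. -/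

section Defs

variable {Q : Type*} [Fintype Q] {ι : Type*} [Fintype ι] [DecidableEq ι]
  {X : ι → Type*} [∀ i, Fintype (X i)] [∀ i, DecidableEq (X i)]
  {Y : Type*} [Fintype Y]

/-- Marginal of `Y`. -/
noncomputable def margY (p : Q × (∀ i, X i) × Y → ℝ) (y : Y) : ℝ :=
  ∑ q, ∑ x, p (q, x, y)

/-- Marginal of `Q`. -/
noncomputable def margQ (p : Q × (∀ i, X i) × Y → ℝ) (q : Q) : ℝ :=
  ∑ x, ∑ y, p (q, x, y)

/-- Marginal of `(Q, Y)`. -/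
noncomputable def margQY (p : Q × (∀ i, X i) × Y → ℝ) (q : Q) (y : Y) : ℝ :=
  ∑ x, p (q, x, y)

/-- Marginal of the predictor `X i`. -/
noncomputable def margXi (p : Q × (∀ i, X i) × Y → ℝ) (i : ι) (u : X i) : ℝ :=
  ∑ q, ∑ x, ∑ y, if x i = u then p (q, x, y) else 0

/-- Marginal of `(X i, Y)`. -/
noncomputable def margXiY (p : Q × (∀ i, X i) × Y → ℝ) (i : ι) (u : X i) (y : Y) : ℝ :=
  ∑ q, ∑ x, if x i = u then p (q, x, y) else 0

/-- Marginal of `(Q, X i)`. -/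
noncomputable def margQXi (p : Q × (∀ i, X i) × Y → ℝ) (q : Q) (i : ι) (u : X i) : ℝ :=
  ∑ x, ∑ y, if x i = u then p (q, x, y) else 0

/-- Marginal of `(Q, X i, Y)`. -/
noncomputable def margQXiY (p : Q × (∀ i, X i) × Y → ℝ) (q : Q) (i : ι) (u : X i) (y : Y) : ℝ :=
  ∑ x, if x i = u then p (q, x, y) else 0

/-- Mutual information `I(Q:Y)`. -/
noncomputable def miQY (p : Q × (∀ i, X i) × Y → ℝ) : ℝ :=
  ∑ q, ∑ y, margQY p q y * logb 2 (margQY p q y / (margQ p q * margY p y))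

/-- Conditional mutual information `I(Q:Y|X i)`. -/
noncomputable def condMIQYXi (p : Q × (∀ i, X i) × Y → ℝ) (i : ι) : ℝ :=
  ∑ q, ∑ u : X i, ∑ y,
    margQXiY p q i u y *
      logb 2 (margQXiY p q i u y * margXi p i u / (margQXi p q i u * margXiY p i u y))

/-- Conditional entropy `H(Q|X i)`. -/
noncomputable def condEntQXi (p : Q × (∀ i, X i) × Y → ℝ) (i : ι) : ℝ :=
  -∑ q, ∑ u : X i, margQXi p q i u * logb 2 (margQXi p q i u / margXi p i u)

/-- Specific information `I(X i : y)` of the predictor `X i` about the state `y`. -/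
noncomputable def specInfoXi (p : Q × (∀ i, X i) × Y → ℝ) (i : ι) (y : Y) : ℝ :=
  ∑ u, (margXiY p i u y / margY p y) * logb 2 ((margXiY p i u y / margY p y) / margXi p i u)

end Defs

/-!
`I(Q:Y)` is the `p_Y`-average of the specific informations `I(Q:y)`, so it suffices to show
`I(Q:y) ≤ I(X i : y)` for every `i` and `y`. By the equality case of Gibbs' inequality,
`I(Q:Y|X i) = 0` makes `Q` and `Y` conditionally independent given `X i`. Hence
`p(q,u|y) / p(q,u) = p(u|y) / p(u)`, and the log-sum inequality over `u` bounds the `q`-term of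
`I(Q:y)` by `∑ u, p(q,u|y) * logb 2 (p(u|y) / p(u))`; summing over `q` gives `I(X i : y)`.
-/

section LogSum

open InformationTheory

variable {κ : Type*} {s : Finset κ} {a b : κ → ℝ} {β : ℝ}

theorem sum_mul_log_div_sum_le (ha : ∀ k ∈ s, 0 ≤ a k) (hb : ∀ k ∈ s, 0 ≤ b k)
    (hab : ∀ k ∈ s, b k = 0 → a k = 0) :
    (∑ k ∈ s, a k) * log ((∑ k ∈ s, a k) / ∑ k ∈ s, b k) ≤ ∑ k ∈ s, a k * log (a k / b k) := by
  rcases (sum_nonneg hb).eq_or_lt with hB | hB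
  · have hb0 := (sum_eq_zero_iff_of_nonneg hb).1 hB.symm
    have ha0 : ∀ k ∈ s, a k = 0 := fun k hk => hab k hk (hb0 k hk)
    rw [sum_eq_zero ha0, zero_mul, sum_eq_zero fun k hk => by rw [ha0 k hk, zero_mul]]
  · have hpoints : ∑ k ∈ s, b k * (a k / b k) = ∑ k ∈ s, a k :=
      sum_congr rfl fun k hk => mul_div_cancel_of_imp' (hab k hk)
    have hvalues : ∑ k ∈ s, b k * (a k / b k * log (a k / b k)) =
        ∑ k ∈ s, a k * log (a k / b k) :=
      sum_congr rfl fun k hk => by rw [← mul_assoc, mul_div_cancel_of_imp' (hab k hk)]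
    have hjensen := convexOn_mul_log.map_centerMass_le (p := fun k => a k / b k) hb hB
      fun k hk => div_nonneg (ha k hk) (hb k hk)
    simp only [centerMass, smul_eq_mul, Function.comp_apply, hpoints, hvalues] at hjensen
    rw [mul_assoc, mul_le_mul_iff_right₀ (inv_pos.2 hB), ← div_eq_inv_mul] at hjensen
    exact hjensen

theorem sum_mul_logb_div_sum_le (hβ : 1 < β) (ha : ∀ k ∈ s, 0 ≤ a k) (hb : ∀ k ∈ s, 0 ≤ b k)
    (hab : ∀ k ∈ s, b k = 0 → a k = 0) :
    (∑ k ∈ s, a k) * logb β ((∑ k ∈ s, a k) / ∑ k ∈ s, b k) ≤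
      ∑ k ∈ s, a k * logb β (a k / b k) := by
  simp only [logb, ← mul_div_assoc, ← sum_div]
  exact div_le_div_of_nonneg_right (sum_mul_log_div_sum_le ha hb hab) (log_pos hβ).le

theorem mul_log_div_eq_mul_klFun_add_sub {x y : ℝ} (h : y = 0 → x = 0) :
    x * log (x / y) = y * klFun (x / y) + (x - y) := by
  rcases eq_or_ne y 0 with rfl | hy
  · simp [h rfl]
  · rw [klFun_apply]
    field_simp
    ring

theorem eq_of_sum_mul_log_div_eq_zero (ha : ∀ k ∈ s, 0 ≤ a k) (hb : ∀ k ∈ s, 0 ≤ b k)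
    (hab : ∀ k ∈ s, b k = 0 → a k = 0) (hsum : ∑ k ∈ s, a k = ∑ k ∈ s, b k)
    (h : ∑ k ∈ s, a k * log (a k / b k) = 0) : ∀ k ∈ s, a k = b k := by
  have hkl : ∑ k ∈ s, b k * klFun (a k / b k) = 0 := by
    rwa [sum_congr rfl fun k hk => mul_log_div_eq_mul_klFun_add_sub (hab k hk), sum_add_distrib,
      sum_sub_distrib, hsum, sub_self, add_zero] at h
  have hdiv_nonneg : ∀ k ∈ s, 0 ≤ a k / b k := fun k hk => div_nonneg (ha k hk) (hb k hk)
  intro k hk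
  have hterm := (sum_eq_zero_iff_of_nonneg fun k hk =>
    mul_nonneg (hb k hk) (klFun_nonneg (hdiv_nonneg k hk))).1 hkl k hk
  rcases mul_eq_zero.1 hterm with hbk | hklFun
  · rw [hab k hk hbk, hbk]
  · exact eq_of_div_eq_one ((klFun_eq_zero_iff (hdiv_nonneg k hk)).1 hklFun)

theorem eq_of_sum_mul_logb_div_eq_zero (hβ : 1 < β) (ha : ∀ k ∈ s, 0 ≤ a k)
    (hb : ∀ k ∈ s, 0 ≤ b k) (hab : ∀ k ∈ s, b k = 0 → a k = 0)
    (hsum : ∑ k ∈ s, a k = ∑ k ∈ s, b k) (h : ∑ k ∈ s, a k * logb β (a k / b k) = 0) :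
    ∀ k ∈ s, a k = b k := by
  simp only [logb, ← mul_div_assoc, ← sum_div] at h
  exact eq_of_sum_mul_log_div_eq_zero ha hb hab hsum
    ((div_eq_zero_iff.1 h).resolve_right (log_pos hβ).ne')

end LogSum

section Information

variable {A B C : Type*} {f : A → C → B → ℝ}

theorem eq_zero_of_sum_left_eq_zero [Fintype A] (hf : ∀ a c b, 0 ≤ f a c b) {c : C} {b : B}
    (h : ∑ a', f a' c b = 0) (a : A) : f a c b = 0 :=
  (sum_eq_zero_iff_of_nonneg fun a' _ => hf a' c b).1 h a (mem_univ a)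

theorem eq_zero_of_sum_right_eq_zero [Fintype B] (hf : ∀ a c b, 0 ≤ f a c b) {a : A} {c : C}
    (h : ∑ b', f a c b' = 0) (b : B) : f a c b = 0 :=
  (sum_eq_zero_iff_of_nonneg fun b' _ => hf a c b').1 h b (mem_univ b)

variable [Fintype A] [Fintype B]

theorem sum_right_eq_zero_of_sum_sum_eq_zero (hf : ∀ a c b, 0 ≤ f a c b) {c : C}
    (h : ∑ a', ∑ b', f a' c b' = 0) (a : A) : ∑ b', f a c b' = 0 :=
  (sum_eq_zero_iff_of_nonneg fun a' _ => sum_nonneg fun b' _ => hf a' c b').1 h a (mem_univ a)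

/-- The mutual information, in bits, of two variables with joint mass function `g`. -/
noncomputable def mutualInfo (g : A → B → ℝ) : ℝ :=
  ∑ a, ∑ b, g a b * logb 2 (g a b / ((∑ b', g a b') * ∑ a', g a' b))

/-- The specific information, in bits, of the first variable about the state `b` of the second,
for two variables with joint mass function `g`. It is `0` if `b` has mass `0`. -/
noncomputable def specificInfo (g : A → B → ℝ) (b : B) : ℝ :=
  ∑ a, g a b / (∑ a', g a' b) * logb 2 (g a b / (∑ a', g a' b) / ∑ b', g a b')

theorem mutualInfo_eq_sum_mul_specificInfo {g : A → B → ℝ} (hg : ∀ a b, 0 ≤ g a b) :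
    mutualInfo g = ∑ b, (∑ a, g a b) * specificInfo g b := by
  rw [mutualInfo, sum_comm]
  refine sum_congr rfl fun b _ => ?_
  rw [specificInfo, mul_sum]
  refine sum_congr rfl fun a _ => ?_
  have hzero : ∑ a', g a' b = 0 → g a b = 0 := fun h =>
    (sum_eq_zero_iff_of_nonneg fun a' _ => hg a' b).1 h a (mem_univ a)
  rw [← mul_assoc, mul_div_cancel_of_imp' hzero, div_div, mul_comm (∑ b', g a b')]

/-- Conditional independence of the first and third variable given the second, for three variables
with joint mass function `f`, in the division-free form `p(a,c,b) p(c) = p(a,c) p(c,b)`. -/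
def IsCondIndep (f : A → C → B → ℝ) : Prop :=
  ∀ a c b, f a c b * ∑ a', ∑ b', f a' c b' = (∑ b', f a c b') * ∑ a', f a' c b

theorem IsCondIndep.div_sum_eq (hci : IsCondIndep f) (hf : ∀ a c b, 0 ≤ f a c b)
    {a : A} {c : C} {b : B} (h : f a c b ≠ 0) :
    f a c b / ∑ b', f a c b' = (∑ a', f a' c b) / ∑ a', ∑ b', f a' c b' := by
  have hAC : ∑ b', f a c b' ≠ 0 := fun h0 => h (eq_zero_of_sum_right_eq_zero hf h0 b)
  have hC : ∑ a', ∑ b', f a' c b' ≠ 0 := fun h0 =>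
    hAC (sum_right_eq_zero_of_sum_sum_eq_zero hf h0 a)
  rw [div_eq_div_iff hAC hC, hci, mul_comm]

/-- The mass function `p(a,c) p(c,b) / p(c)`, which has the same `(a,c)`- and `(c,b)`-marginals as
`f` but makes the outer variables conditionally independent given the middle one. It is `0` where
`p(c) = 0`. -/
noncomputable def condProduct (f : A → C → B → ℝ) (a : A) (c : C) (b : B) : ℝ :=
  (∑ b', f a c b') * (∑ a', f a' c b) / ∑ a', ∑ b', f a' c b'

theorem condProduct_nonneg (hf : ∀ a c b, 0 ≤ f a c b) (a : A) (c : C) (b : B) :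
    0 ≤ condProduct f a c b :=
  div_nonneg (mul_nonneg (sum_nonneg fun b' _ => hf a c b') (sum_nonneg fun a' _ => hf a' c b))
    (sum_nonneg fun a' _ => sum_nonneg fun b' _ => hf a' c b')

theorem eq_zero_of_condProduct_eq_zero (hf : ∀ a c b, 0 ≤ f a c b) {a : A} {c : C} {b : B}
    (h : condProduct f a c b = 0) : f a c b = 0 := by
  rcases div_eq_zero_iff.1 h with hmul | hC
  · exact (mul_eq_zero.1 hmul).elim (eq_zero_of_sum_right_eq_zero hf · b)
      (eq_zero_of_sum_left_eq_zero hf · a)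
  · exact eq_zero_of_sum_right_eq_zero hf (sum_right_eq_zero_of_sum_sum_eq_zero hf hC a) b

theorem sum_condProduct (hf : ∀ a c b, 0 ≤ f a c b) (a : A) (c : C) :
    ∑ b, condProduct f a c b = ∑ b, f a c b := by
  simp only [condProduct]
  rw [← sum_div, ← mul_sum, sum_comm (f := fun b a' => f a' c b)]
  exact mul_div_cancel_of_imp fun h => sum_right_eq_zero_of_sum_sum_eq_zero hf h a

theorem isCondIndep_of_eq_condProduct (hf : ∀ a c b, 0 ≤ f a c b)
    (h : ∀ a c b, f a c b = condProduct f a c b) : IsCondIndep f := by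
  intro a c b
  rw [h a c b]
  exact div_mul_cancel_of_imp fun hC => by
    rw [sum_right_eq_zero_of_sum_sum_eq_zero hf hC a, zero_mul]

variable [Fintype C]

/-- The conditional mutual information, in bits, of the first and third variable given the second,
for three variables with joint mass function `f`. -/
noncomputable def condMutualInfo (f : A → C → B → ℝ) : ℝ :=
  ∑ a, ∑ c, ∑ b, f a c b *
    logb 2 (f a c b * (∑ a', ∑ b', f a' c b') / ((∑ b', f a c b') * ∑ a', f a' c b))

theorem condMutualInfo_eq_sum_mul_logb_div_condProduct (f : A → C → B → ℝ) :
    condMutualInfo f = ∑ a, ∑ c, ∑ b, f a c b * logb 2 (f a c b / condProduct f a c b) := by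
  simp only [condMutualInfo, condProduct, div_div_eq_mul_div]

theorem isCondIndep_of_condMutualInfo_eq_zero (hf : ∀ a c b, 0 ≤ f a c b)
    (h : condMutualInfo f = 0) : IsCondIndep f := by
  let joint : A × C × B → ℝ := fun t => f t.1 t.2.1 t.2.2
  let product : A × C × B → ℝ := fun t => condProduct f t.1 t.2.1 t.2.2
  have hmass : ∑ t, joint t = ∑ t, product t := by
    simp only [Fintype.sum_prod_type, joint, product, sum_condProduct hf]
  have hdivergence : ∑ t, joint t * logb 2 (joint t / product t) = 0 := by
    rw [condMutualInfo_eq_sum_mul_logb_div_condProduct] at h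
    simpa only [Fintype.sum_prod_type] using h
  have heq : ∀ t ∈ univ, joint t = product t :=
    eq_of_sum_mul_logb_div_eq_zero one_lt_two (fun _ _ => hf _ _ _)
      (fun _ _ => condProduct_nonneg hf _ _ _) (fun _ _ => eq_zero_of_condProduct_eq_zero hf)
      hmass hdivergence
  exact isCondIndep_of_eq_condProduct hf fun a c b => heq (a, c, b) (mem_univ _)

theorem IsCondIndep.specificInfo_le (hci : IsCondIndep f) (hf : ∀ a c b, 0 ≤ f a c b) (b : B) :
    specificInfo (fun a b => ∑ c, f a c b) b ≤ specificInfo (fun c b => ∑ a, f a c b) b := by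
  simp only [specificInfo]
  rw [sum_comm (f := fun c a => f a c b)]
  set m := ∑ a, ∑ c, f a c b
  have hm : 0 ≤ m := sum_nonneg fun a _ => sum_nonneg fun c _ => hf a c b
  calc ∑ a, (∑ c, f a c b) / m * logb 2 ((∑ c, f a c b) / m / ∑ b', ∑ c, f a c b')
      ≤ ∑ a, ∑ c, f a c b / m * logb 2 (f a c b / m / ∑ b', f a c b') := by
        refine sum_le_sum fun a _ => ?_
        rw [sum_comm, sum_div]
        exact sum_mul_logb_div_sum_le one_lt_two (fun c _ => div_nonneg (hf a c b) hm)
          (fun c _ => sum_nonneg fun b' _ => hf a c b')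
          fun c _ h => by rw [eq_zero_of_sum_right_eq_zero hf h b, zero_div]
    _ = ∑ a, ∑ c, f a c b / m * logb 2 ((∑ a', f a' c b) / m / ∑ b', ∑ a', f a' c b') := by
        refine sum_congr rfl fun a _ => sum_congr rfl fun c _ => ?_
        rcases eq_or_ne (f a c b) 0 with h | h
        · rw [h, zero_div, zero_mul, zero_mul]
        · rw [div_right_comm, hci.div_sum_eq hf h, div_right_comm, sum_comm]
    _ = ∑ c, (∑ a, f a c b) / m * logb 2 ((∑ a', f a' c b) / m / ∑ b', ∑ a', f a' c b') := by
        rw [sum_comm]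
        simp only [← sum_mul, ← sum_div]

end Information

section Marginals

variable {Q : Type*} {ι : Type*} [Fintype ι] [DecidableEq ι]
  {X : ι → Type*} [∀ i, Fintype (X i)] {Y : Type*} (p : Q × (∀ i, X i) × Y → ℝ)

theorem sum_margQY_eq_margQ [Fintype Y] (q : Q) : ∑ y, margQY p q y = margQ p q :=
  sum_comm

theorem miQY_eq_mutualInfo [Fintype Q] [Fintype Y] : miQY p = mutualInfo (margQY p) := by
  simp only [miQY, mutualInfo, sum_margQY_eq_margQ]
  rfl

variable [∀ i, DecidableEq (X i)] (i : ι)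

theorem margQXiY_nonneg {p : Q × (∀ i, X i) × Y → ℝ} (hp : ∀ t, 0 ≤ p t) (q : Q) (u : X i)
    (y : Y) : 0 ≤ margQXiY p q i u y :=
  sum_nonneg fun x _ => ite_nonneg (hp (q, x, y)) le_rfl

theorem sum_margQXiY_eq_margQY (q : Q) (y : Y) : ∑ u, margQXiY p q i u y = margQY p q y := by
  simp only [margQXiY, margQY]
  rw [sum_comm]
  simp only [sum_ite_eq, mem_univ, if_true]

theorem sum_margQXiY_eq_margQXi [Fintype Y] (q : Q) (u : X i) :
    ∑ y, margQXiY p q i u y = margQXi p q i u :=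
  sum_comm

theorem sum_margXiY_eq_margY [Fintype Q] (y : Y) : ∑ u, margXiY p i u y = margY p y := by
  calc ∑ u, margXiY p i u y = ∑ q, ∑ u, margQXiY p q i u y := sum_comm
    _ = margY p y := sum_congr rfl fun q _ => sum_margQXiY_eq_margQY p i q y

variable [Fintype Q] [Fintype Y]

theorem sum_margXiY_eq_margXi (u : X i) : ∑ y, margXiY p i u y = margXi p i u := by
  calc ∑ y, margXiY p i u y = ∑ q, ∑ y, margQXiY p q i u y := sum_comm
    _ = margXi p i u := sum_congr rfl fun q _ => sum_margQXiY_eq_margQXi p i q u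

theorem specInfoXi_eq_specificInfo (y : Y) : specInfoXi p i y = specificInfo (margXiY p i) y := by
  simp only [specInfoXi, specificInfo, sum_margXiY_eq_margY, sum_margXiY_eq_margXi]

theorem condMIQYXi_eq_condMutualInfo :
    condMIQYXi p i = condMutualInfo fun q u y => margQXiY p q i u y := by
  simp only [condMIQYXi, condMutualInfo, sum_margQXiY_eq_margQXi]
  rfl

theorem specificInfo_margQY_le_specInfoXi {p : Q × (∀ i, X i) × Y → ℝ} (hp : ∀ t, 0 ≤ p t)
    (hcmi : condMIQYXi p i = 0) (y : Y) :
    specificInfo (margQY p) y ≤ specInfoXi p i y := by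
  rw [condMIQYXi_eq_condMutualInfo] at hcmi
  have hp' := margQXiY_nonneg i hp
  have hle := (isCondIndep_of_condMutualInfo_eq_zero hp' hcmi).specificInfo_le hp' y
  simp only [sum_margQXiY_eq_margQY] at hle
  rw [specInfoXi_eq_specificInfo]
  exact hle

end Marginals

theorem stmt_6 {Q : Type*} [Fintype Q] {ι : Type*} [Fintype ι] [DecidableEq ι] [Nonempty ι]
    {X : ι → Type*} [∀ i, Fintype (X i)] [∀ i, DecidableEq (X i)]
    {Y : Type*} [Fintype Y]
    (p : Q × (∀ i, X i) × Y → ℝ)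
    (hnn : ∀ a, 0 ≤ p a)
    (hsum : ∑ a, p a = 1)
    (hcmi : ∀ i, condMIQYXi p i = 0) :
    miQY p ≤
      ∑ y ∈ univ.filter (fun y => 0 < margY p y),
        margY p y * univ.inf' univ_nonempty (fun i => specInfoXi p i y) := by
  have hQY : ∀ q y, 0 ≤ margQY p q y := fun q y => sum_nonneg fun x _ => hnn (q, x, y)
  have hY : ∀ y, 0 ≤ margY p y := fun y => sum_nonneg fun q _ => hQY q y
  calc miQY p = ∑ y, margY p y * specificInfo (margQY p) y := by
        rw [miQY_eq_mutualInfo, mutualInfo_eq_sum_mul_specificInfo hQY]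
        rfl
    _ ≤ ∑ y, margY p y * univ.inf' univ_nonempty (fun i => specInfoXi p i y) := by
        refine sum_le_sum fun y _ => mul_le_mul_of_nonneg_left (le_inf' _ _ fun i _ => ?_) (hY y)
        exact specificInfo_margQY_le_specInfoXi i hnn (hcmi i) y
    _ = ∑ y ∈ univ.filter (fun y => 0 < margY p y),
          margY p y * univ.inf' univ_nonempty (fun i => specInfoXi p i y) :=
        (sum_filter_of_ne fun y _ h => (hY y).lt_of_ne' (left_ne_zero_of_mul h)).symm
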